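/- Let f : [0,∞) → ℝ be a four times continuously differentiable convex function with f(1) = 1, and suppose g(x) = x²·f''(x) belongs to 𝒯⁺, i.e. g is nonnegative and x²·g''(x) − g(α)·g(x/α) ≤ 0 for all x ≥ 0 and α > 0. Then for all finite sets 𝒴, 𝒵 and all pmfs q_Y ≪ r_Y on 𝒴 and q_Z ≪ r_Z on 𝒵, Σ_f(q_Y⊗q_Z ‖ r_Y⊗r_Z) ≤ Σ_f(q_Y‖r_Y) · Σ_f(q_Z‖r_Z), where Σ_f(p‖q) = ∑_{x : q(x)>0} q(x) f(p(x)/q(x)). -/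

import Mathlib

open scoped BigOperators

/-- A probability mass function on a finite type: nonnegative and summing to 1. -/
def IsPMF {X : Type*} [Fintype X] (p : X → ℝ) : Prop :=
  (∀ x, 0 ≤ p x) ∧ ∑ x, p x = 1

/-- Absolute continuity `p ≪ q`: `q x = 0` implies `p x = 0`. -/
def AbsCont {X : Type*} (p q : X → ℝ) : Prop :=
  ∀ x, q x = 0 → p x = 0

/-- `Σ_f(p‖q) = ∑_{x : q(x) > 0} q(x) f(p(x)/q(x))` (the f-divergence when `f 1 = 0`). -/
noncomputable def fDiv {X : Type*} [Fintype X] (f : ℝ → ℝ) (p q : X → ℝ) : ℝ :=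
  ∑ x, if 0 < q x then q x * f (p x / q x) else 0

/-!
Write `C` for `Σ_f(q_Z‖r_Z)` and `φ t` for `Σ_{f(t ·)}(q_Z‖r_Z)`. Then
`Σ_f(q_Y⊗q_Z‖r_Y⊗r_Z) = Σ_φ(q_Y‖r_Y)` and `φ 1 = C = C * f 1`, so by Jensen's inequality it suffices
that `φ - C * f` is concave. Its second derivative at `t` is `Σ_u(q_Z‖r_Z) - C * f'' t` with
`u x = x² f''(t x) = g (t x) / t²`. Since `u 1 = f'' t * f 1`, a second use of Jensen's inequality
reduces nonpositivity to concavity of `u - f'' t * f`, which is the defining inequality of `𝒯⁺`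
at the point `t x` with `α = t`.
-/

open Set

section Divergence

variable {X Y Z : Type*} [Fintype X] [Fintype Y] [Fintype Z]

theorem fDiv_eq_sum (f : ℝ → ℝ) (p : X → ℝ) {q : X → ℝ} (hq : ∀ x, 0 ≤ q x) :
    fDiv f p q = ∑ x, q x * f (p x / q x) := by
  refine Finset.sum_congr rfl fun x _ => ite_eq_left_iff.2 fun hx => ?_
  rw [le_antisymm (not_lt.1 hx) (hq x), zero_mul]

theorem fDiv_prod (f : ℝ → ℝ) (p : Y → ℝ) (p' : Z → ℝ) {q : Y → ℝ} {q' : Z → ℝ}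
    (hq : ∀ y, 0 ≤ q y) (hq' : ∀ z, 0 ≤ q' z) :
    fDiv f (fun a : Y × Z => p a.1 * p' a.2) (fun a : Y × Z => q a.1 * q' a.2) =
      fDiv (fun t => fDiv (fun x => f (t * x)) p' q') p q := by
  rw [fDiv_eq_sum _ _ fun a : Y × Z => mul_nonneg (hq a.1) (hq' a.2), fDiv_eq_sum _ _ hq,
    Fintype.sum_prod_type]
  simp only [fDiv_eq_sum _ _ hq', Finset.mul_sum, mul_assoc, div_mul_div_comm]

theorem hasDerivAt_fDiv {F : ℝ → ℝ → ℝ} {F' : ℝ → ℝ} {p q : X → ℝ} {t : ℝ}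
    (hF : ∀ x, HasDerivAt (fun s => F s (p x / q x)) (F' (p x / q x)) t) :
    HasDerivAt (fun s => fDiv (F s) p q) (fDiv F' p q) t := by
  refine HasDerivAt.fun_sum fun x _ => ?_
  split_ifs
  · exact (hF x).const_mul (q x)
  · exact hasDerivAt_const t 0

theorem continuousOn_fDiv {F : ℝ → ℝ → ℝ} {p q : X → ℝ} {s : Set ℝ}
    (hF : ∀ x, ContinuousOn (fun t => F t (p x / q x)) s) :
    ContinuousOn (fun t => fDiv (F t) p q) s := by
  refine continuousOn_finsetSum _ fun x _ => ?_
  split_ifs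
  · exact (hF x).const_mul (q x)
  · exact continuousOn_const

theorem AbsCont.sum_mul_div {p q : X → ℝ} (hpq : AbsCont p q) :
    ∑ x, q x * (p x / q x) = ∑ x, p x :=
  Finset.sum_congr rfl fun x _ => mul_div_cancel_of_imp' (hpq x)

theorem fDiv_le_of_concaveOn {F : ℝ → ℝ} (hF : ConcaveOn ℝ (Ici 0) F) {p q : X → ℝ}
    (hp : IsPMF p) (hq : IsPMF q) (hpq : AbsCont p q) : fDiv F p q ≤ F 1 := by
  calc fDiv F p q = ∑ x, q x * F (p x / q x) := fDiv_eq_sum F p hq.1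
    _ ≤ F (∑ x, q x * (p x / q x)) :=
      hF.le_map_sum (fun x _ => hq.1 x) hq.2 fun x _ => div_nonneg (hp.1 x) (hq.1 x)
    _ = F 1 := by rw [hpq.sum_mul_div, hp.2]

theorem fDiv_le_mul_fDiv {u v : ℝ → ℝ} {c : ℝ}
    (huv : ConcaveOn ℝ (Ici 0) fun x => u x - c * v x) (h1 : u 1 ≤ c * v 1)
    {p q : X → ℝ} (hp : IsPMF p) (hq : IsPMF q) (hpq : AbsCont p q) :
    fDiv u p q ≤ c * fDiv v p q := by
  have hlin : fDiv (fun x => u x - c * v x) p q = fDiv u p q - c * fDiv v p q := by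
    simp only [fDiv_eq_sum _ _ hq.1, Finset.mul_sum, ← Finset.sum_sub_distrib, mul_sub,
      mul_left_comm c]
  have hjensen := fDiv_le_of_concaveOn huv hp hq hpq
  linarith

end Divergence

theorem hasDerivAt_of_hasDerivWithinAt_Ici {φ φ' : ℝ → ℝ} {a : ℝ}
    (h : ∀ x ∈ Ici a, HasDerivWithinAt φ (φ' x) (Ici a) x) :
    ∀ x ∈ Ioi a, HasDerivAt φ (φ' x) x :=
  fun x hx => (h x (Ioi_subset_Ici_self hx)).hasDerivAt (Ici_mem_nhds hx)

theorem concaveOn_Ici_of_hasDerivAt2_nonpos {φ φ' φ'' : ℝ → ℝ} {a : ℝ}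
    (hφ : ContinuousOn φ (Ici a)) (hφ' : ∀ x ∈ Ioi a, HasDerivAt φ (φ' x) x)
    (hφ'' : ∀ x ∈ Ioi a, HasDerivAt φ' (φ'' x) x) (hnonpos : ∀ x ∈ Ioi a, φ'' x ≤ 0) :
    ConcaveOn ℝ (Ici a) φ := by
  rw [← interior_Ici] at hφ' hφ'' hnonpos
  exact concaveOn_of_hasDerivWithinAt2_nonpos (convex_Ici a) hφ
    (fun x hx => (hφ' x hx).hasDerivWithinAt) (fun x hx => (hφ'' x hx).hasDerivWithinAt) hnonpos

theorem continuousOn_Ici_comp_mul_const {φ : ℝ → ℝ} (hφ : ContinuousOn φ (Ici 0))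
    {c : ℝ} (hc : 0 ≤ c) : ContinuousOn (fun t => φ (t * c)) (Ici 0) :=
  hφ.comp (continuousOn_id.mul_const c) fun _ ht => mul_nonneg ht hc

theorem hasDerivAt_comp_mul_const {φ φ' : ℝ → ℝ} (hφ : ∀ x ∈ Ioi 0, HasDerivAt φ (φ' x) x)
    {c : ℝ} (hc : 0 ≤ c) {t : ℝ} (ht : 0 < t) :
    HasDerivAt (fun s => φ (s * c)) (c * φ' (t * c)) t := by
  rcases hc.eq_or_lt with rfl | hc
  · simpa only [mul_zero, zero_mul] using hasDerivAt_const t (φ 0)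
  · rw [mul_comm c]
    exact (hφ (t * c) (mul_pos ht hc)).comp t (hasDerivAt_mul_const c)

theorem concaveOn_fDiv_comp_mul_sub {X : Type*} [Fintype X] {f f' f'' : ℝ → ℝ} {C : ℝ}
    {p q : X → ℝ} (hf : ContinuousOn f (Ici 0)) (hf' : ∀ x ∈ Ioi 0, HasDerivAt f (f' x) x)
    (hf'' : ∀ x ∈ Ioi 0, HasDerivAt f' (f'' x) x)
    (hp : ∀ x, 0 ≤ p x) (hq : ∀ x, 0 ≤ q x)
    (hC : ∀ t ∈ Ioi 0, fDiv (fun x => x * (x * f'' (t * x))) p q ≤ C * f'' t) :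
    ConcaveOn ℝ (Ici 0) fun t => fDiv (fun x => f (t * x)) p q - C * f t := by
  have hratio : ∀ x, 0 ≤ p x / q x := fun x => div_nonneg (hp x) (hq x)
  refine concaveOn_Ici_of_hasDerivAt2_nonpos
    (φ' := fun t => fDiv (fun x => x * f' (t * x)) p q - C * f' t)
    (φ'' := fun t => fDiv (fun x => x * (x * f'' (t * x))) p q - C * f'' t)
    ?_ (fun t ht => ?_) (fun t ht => ?_) fun t ht => sub_nonpos.2 (hC t ht)
  · exact (continuousOn_fDiv fun x => continuousOn_Ici_comp_mul_const hf (hratio x)).sub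
      (hf.const_mul C)
  · exact (hasDerivAt_fDiv fun x => hasDerivAt_comp_mul_const hf' (hratio x) ht).sub
      ((hf' t ht).const_mul C)
  · exact (hasDerivAt_fDiv fun x =>
      (hasDerivAt_comp_mul_const hf'' (hratio x) ht).const_mul (p x / q x)).sub
      ((hf'' t ht).const_mul C)

section Tplus

variable {f f' f'' g g' g'' : ℝ → ℝ}

theorem concaveOn_sq_mul_comp_mul_sub_of_Tplus
    (hf : ContinuousOn f (Ici 0)) (hf' : ∀ x ∈ Ioi 0, HasDerivAt f (f' x) x)
    (hf'' : ∀ x ∈ Ioi 0, HasDerivAt f' (f'' x) x)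
    (hg : ∀ x ∈ Ici 0, g x = x ^ 2 * f'' x) (hgcont : ContinuousOn g (Ici 0))
    (hg' : ∀ x ∈ Ioi 0, HasDerivAt g (g' x) x) (hg'' : ∀ x ∈ Ioi 0, HasDerivAt g' (g'' x) x)
    (hTplus : ∀ x ∈ Ioi 0, ∀ α : ℝ, 0 < α → x ^ 2 * g'' x - g α * g (x / α) ≤ 0)
    {t : ℝ} (ht : 0 < t) :
    ConcaveOn ℝ (Ici 0) fun x => x * (x * f'' (t * x)) - f'' t * f x := by
  have hconc : ConcaveOn ℝ (Ici 0) fun x => g (x * t) / t ^ 2 - f'' t * f x := by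
    refine concaveOn_Ici_of_hasDerivAt2_nonpos
      (φ' := fun x => t * g' (x * t) / t ^ 2 - f'' t * f' x)
      (φ'' := fun x => t * (t * g'' (x * t)) / t ^ 2 - f'' t * f'' x)
      ?_ (fun x hx => ?_) (fun x hx => ?_) fun x (hx : 0 < x) => ?_
    · exact ((continuousOn_Ici_comp_mul_const hgcont ht.le).div_const _).sub (hf.const_mul _)
    · exact ((hasDerivAt_comp_mul_const hg' ht.le hx).div_const _).sub ((hf' x hx).const_mul _)
    · exact (((hasDerivAt_comp_mul_const hg'' ht.le hx).const_mul t).div_const _).sub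
        ((hf'' x hx).const_mul _)
    · calc t * (t * g'' (x * t)) / t ^ 2 - f'' t * f'' x
          = ((x * t) ^ 2 * g'' (x * t) - g t * g (x * t / t)) / (x * t) ^ 2 := by
            rw [mul_div_cancel_right₀ x ht.ne', hg t ht.le, hg x hx.le]
            field_simp
        _ ≤ 0 := div_nonpos_of_nonpos_of_nonneg (hTplus _ (mul_pos hx ht) t ht) (sq_nonneg _)
  refine hconc.congr fun x hx => ?_
  dsimp only
  rw [hg _ (mul_nonneg hx ht.le), mul_comm t x]
  field_simp

/-- Applies to `f x = x * log x + 1`, with `g x = x`, although `f` is not differentiable at `0`.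
Since `f''` is a derivative only on `(0, ∞)`, `hg` at `0` just says that `g 0 = 0`. -/
theorem fDiv_submultiplicative_of_Tplus_general
    (hf : ContinuousOn f (Ici 0)) (hf' : ∀ x ∈ Ioi 0, HasDerivAt f (f' x) x)
    (hf'' : ∀ x ∈ Ioi 0, HasDerivAt f' (f'' x) x) (hf1 : f 1 = 1)
    (hg : ∀ x ∈ Ici 0, g x = x ^ 2 * f'' x) (hgcont : ContinuousOn g (Ici 0))
    (hg' : ∀ x ∈ Ioi 0, HasDerivAt g (g' x) x) (hg'' : ∀ x ∈ Ioi 0, HasDerivAt g' (g'' x) x)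
    (hTplus : ∀ x ∈ Ioi 0, ∀ α : ℝ, 0 < α → x ^ 2 * g'' x - g α * g (x / α) ≤ 0)
    {Y Z : Type*} [Fintype Y] [Fintype Z] {qY rY : Y → ℝ} {qZ rZ : Z → ℝ}
    (hqY : IsPMF qY) (hrY : IsPMF rY) (hqZ : IsPMF qZ) (hrZ : IsPMF rZ)
    (hY : AbsCont qY rY) (hZ : AbsCont qZ rZ) :
    fDiv f (fun p : Y × Z => qY p.1 * qZ p.2) (fun p : Y × Z => rY p.1 * rZ p.2) ≤
      fDiv f qY rY * fDiv f qZ rZ := by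
  have hsecond : ∀ t ∈ Ioi 0,
      fDiv (fun x => x * (x * f'' (t * x))) qZ rZ ≤ fDiv f qZ rZ * f'' t := fun t ht => by
    rw [mul_comm (fDiv f qZ rZ)]
    refine fDiv_le_mul_fDiv ?_ (by simp [hf1]) hqZ hrZ hZ
    exact concaveOn_sq_mul_comp_mul_sub_of_Tplus hf hf' hf'' hg hgcont hg' hg'' hTplus ht
  rw [fDiv_prod f qY qZ hrY.1 hrZ.1, mul_comm]
  refine fDiv_le_mul_fDiv ?_ (by simp [hf1]) hqY hrY hY
  exact concaveOn_fDiv_comp_mul_sub hf hf' hf'' hqZ.1 hrZ.1 hsecond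

end Tplus

/-- Theorem for `G(x) = log(1+x)`: if `f` is four times continuously differentiable
and convex on `[0,∞)` with `f 1 = 1`, and `g x = x² f''(x)` belongs to `𝒯⁺`
(i.e. `g ≥ 0` and `x² g''(x) − g(α) g(x/α) ≤ 0` for all `x ≥ 0`, `α > 0`), then
`Σ_f` is submultiplicative over products:
`Σ_f(q_Y⊗q_Z‖r_Y⊗r_Z) ≤ Σ_f(q_Y‖r_Y) · Σ_f(q_Z‖r_Z)`. -/
theorem fDiv_submultiplicative_of_Tplus
    (f f' f'' f3 f4 g g' g'' : ℝ → ℝ)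
    (hf' : ∀ x ∈ Set.Ici (0 : ℝ), HasDerivWithinAt f (f' x) (Set.Ici 0) x)
    (hf'' : ∀ x ∈ Set.Ici (0 : ℝ), HasDerivWithinAt f' (f'' x) (Set.Ici 0) x)
    (hf3 : ∀ x ∈ Set.Ici (0 : ℝ), HasDerivWithinAt f'' (f3 x) (Set.Ici 0) x)
    (hf4 : ∀ x ∈ Set.Ici (0 : ℝ), HasDerivWithinAt f3 (f4 x) (Set.Ici 0) x)
    (hf4cont : ContinuousOn f4 (Set.Ici 0))
    (hconv : ConvexOn ℝ (Set.Ici 0) f) (hf1 : f 1 = 1)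
    (hg : ∀ x : ℝ, g x = x ^ 2 * f'' x)
    (hg' : ∀ x ∈ Set.Ici (0 : ℝ), HasDerivWithinAt g (g' x) (Set.Ici 0) x)
    (hg'' : ∀ x ∈ Set.Ici (0 : ℝ), HasDerivWithinAt g' (g'' x) (Set.Ici 0) x)
    (hg_nonneg : ∀ x ∈ Set.Ici (0 : ℝ), 0 ≤ g x)
    (hTplus : ∀ x ∈ Set.Ici (0 : ℝ), ∀ α : ℝ, 0 < α →
      x ^ 2 * g'' x - g α * g (x / α) ≤ 0) :
    ∀ (Y Z : Type) [Fintype Y] [Fintype Z] (qY rY : Y → ℝ) (qZ rZ : Z → ℝ),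
      IsPMF qY → IsPMF rY → IsPMF qZ → IsPMF rZ → AbsCont qY rY → AbsCont qZ rZ →
      fDiv f (fun p : Y × Z => qY p.1 * qZ p.2) (fun p : Y × Z => rY p.1 * rZ p.2) ≤
        fDiv f qY rY * fDiv f qZ rZ := by
  intro Y Z _ _ qY rY qZ rZ
  exact fDiv_submultiplicative_of_Tplus_general (HasDerivWithinAt.continuousOn hf')
    (hasDerivAt_of_hasDerivWithinAt_Ici hf') (hasDerivAt_of_hasDerivWithinAt_Ici hf'') hf1
    (fun x _ => hg x) (HasDerivWithinAt.continuousOn hg')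
    (hasDerivAt_of_hasDerivWithinAt_Ici hg') (hasDerivAt_of_hasDerivWithinAt_Ici hg'')
    fun x hx => hTplus x (Ioi_subset_Ici_self hx)
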